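/- Let F = {f₁,…,f_k} be an IFS of similarities on ℝ^d satisfying the open set condition with factors c_i ∈ (0,1) and attractor K of positive diameter, equipped with its natural fractal structure. Then dim_B(K) = dim³(K) = dim⁴(K) = dim⁵(K) = dim⁶(K) = dim_H(K) = s, where s solves ∑_{i∈I} c_i^s = 1, and moreover H^s_H(K), H^s_3(K), H^s_4(K), H^s_5(K), H^s_6(K) ∈ (0, ∞). -/

import Mathlib

open Metric Set Filter Topology MeasureTheory ENNReal NNReal

noncomputable section

/-- A map is a similarity with factor `c` if it scales all distances exactly by `c`. -/
def IsSimilarity {X : Type*} [MetricSpace X] (f : X → X) (c : ℝ) : Prop :=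
  ∀ x y, dist (f x) (f y) = c * dist x y

/-- Composition `f_{ω₁} ∘ ⋯ ∘ f_{ω_n}` of the maps of an IFS along a word `ω`. -/
def wordComp {X : Type*} {k : ℕ} (f : Fin k → X → X) {n : ℕ} (ω : Fin n → Fin k) : X → X :=
  (List.ofFn fun i => f (ω i)).foldr (· ∘ ·) id

/-- Number of elements of level `Γ_n` of the natural fractal structure (counted with
multiplicity over words) that meet `K`. -/
def levelCount {X : Type*} [MetricSpace X] {k : ℕ} (f : Fin k → X → X) (K : Set X)
    (n : ℕ) : ℕ :=
  Set.ncard {ω : Fin n → Fin k | ((wordComp f ω '' K) ∩ K).Nonempty}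

/-- `δ(K, Γ_n)`: supremum of diameters of the elements of level `Γ_n` meeting `K`. -/
def deltaLevel {X : Type*} [MetricSpace X] {k : ℕ} (f : Fin k → X → X) (K : Set X)
    (n : ℕ) : ℝ :=
  sSup {d : ℝ | ∃ ω : Fin n → Fin k, ((wordComp f ω '' K) ∩ K).Nonempty ∧
    d = Metric.diam (wordComp f ω '' K)}

/-- `N_δ(K)`: the largest number of disjoint closed balls of radius `δ` with centres in `K`. -/
def packingNum {X : Type*} [MetricSpace X] (K : Set X) (δ : ℝ) : ℕ :=
  sSup {m : ℕ | ∃ t : Finset X, t.card = m ∧ ↑t ⊆ K ∧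
    (t : Set X).Pairwise fun x y => Disjoint (Metric.closedBall x δ) (Metric.closedBall y δ)}

/-- The pre-measure `H^s_{n,3}(K)`: infimum over whole levels `m ≥ n` of the sum of the
`s`-th powers of the diameters of all elements of that level (with multiplicity). -/
def H3pre {X : Type*} [MetricSpace X] {k : ℕ} (f : Fin k → X → X) (K : Set X)
    (s : ℝ) (n : ℕ) : ℝ≥0∞ :=
  ⨅ m : {m : ℕ // n ≤ m}, ∑ ω : Fin m.1 → Fin k,
    ENNReal.ofReal (Metric.diam (wordComp f ω '' K)) ^ s

/-- `H^s_3(K)`: the (monotone) limit of `H^s_{n,3}(K)` as `n → ∞`. -/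
def H3 {X : Type*} [MetricSpace X] {k : ℕ} (f : Fin k → X → X) (K : Set X) (s : ℝ) : ℝ≥0∞ :=
  ⨆ n : ℕ, H3pre f K s n

/-- `H^s_4(K)`: limit over `n` of the infimum over finite covers of `K` by elements of
levels `≥ n` of the natural fractal structure. -/
def H4 {X : Type*} [MetricSpace X] {k : ℕ} (f : Fin k → X → X) (K : Set X) (s : ℝ) : ℝ≥0∞ :=
  ⨆ n : ℕ, ⨅ (𝒜 : Set (Set X)) (_ : 𝒜.Finite ∧
      (∀ A ∈ 𝒜, ∃ m, n ≤ m ∧ ∃ ω : Fin m → Fin k, A = wordComp f ω '' K) ∧ K ⊆ ⋃₀ 𝒜),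
    ∑' A : 𝒜, ENNReal.ofReal (Metric.diam (A : Set X)) ^ s

/-- `H^s_5(K)`: limit over `n` of the infimum over countable covers of `K` by elements of
levels `≥ n` of the natural fractal structure. -/
def H5 {X : Type*} [MetricSpace X] {k : ℕ} (f : Fin k → X → X) (K : Set X) (s : ℝ) : ℝ≥0∞ :=
  ⨆ n : ℕ, ⨅ (𝒜 : Set (Set X)) (_ : 𝒜.Countable ∧
      (∀ A ∈ 𝒜, ∃ m, n ≤ m ∧ ∃ ω : Fin m → Fin k, A = wordComp f ω '' K) ∧ K ⊆ ⋃₀ 𝒜),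
    ∑' A : 𝒜, ENNReal.ofReal (Metric.diam (A : Set X)) ^ s

/-- `H^s_6(K)`: limit as `δ → 0` of the infimum over countable covers of `K` by
fractal-structure elements of diameter at most `δ`. -/
def H6 {X : Type*} [MetricSpace X] {k : ℕ} (f : Fin k → X → X) (K : Set X) (s : ℝ) : ℝ≥0∞ :=
  ⨆ (δ : ℝ) (_ : 0 < δ), ⨅ (𝒜 : Set (Set X)) (_ : 𝒜.Countable ∧
      (∀ A ∈ 𝒜, (∃ m, ∃ ω : Fin m → Fin k, A = wordComp f ω '' K) ∧ Metric.diam A ≤ δ) ∧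
      K ⊆ ⋃₀ 𝒜),
    ∑' A : 𝒜, ENNReal.ofReal (Metric.diam (A : Set X)) ^ s

/-- The open set condition for a family of self-maps of `ℝ^d`. -/
def OSC {d k : ℕ} (f : Fin k → EuclideanSpace ℝ (Fin d) → EuclideanSpace ℝ (Fin d)) : Prop :=
  ∃ V : Set (EuclideanSpace ℝ (Fin d)), V.Nonempty ∧ IsOpen V ∧ Bornology.IsBounded V ∧
    (∀ i, f i '' V ⊆ V) ∧ Pairwise fun i j => Disjoint (f i '' V) (f j '' V)

/-!
Write `c_ω = ∏ c_{ω_j}` for the ratio of `f_ω`. Every element of the fractal structure is a set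
of diameter `c_ω diam K` and small diameter at high levels, so `μH[t] K ≤ H6 ≤ H5 ≤ H4 ≤ H3`, and
the level-`m` sum of `t`-th powers of diameters is `(∑ c_i ^ t) ^ m * diam K ^ t`: it is constant
at `t = s` and tends to `0` for `t > s`. What remains is Moran's lower bound `0 < μH[s] K`.

Give the piece `f_ω(K)` the mass `c_ω ^ s`. Given a finite cover of `K` by balls, subdivide each
piece until its ratio `ρ` is comparable to the radius `r` of a ball meeting it. The image of the
feasible set `V` is then a set of `Q`-measure at least a constant times `r ^ Q` inside a
proportional enlargement of that ball, and these images are disjoint; as the enlarged ball has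
`Q`-measure at most a constant times `r ^ Q`, it carries mass at most a constant times `r ^ s`.

For the box dimension, a maximal packing by balls of radius `δ` yields a cover by balls of radius
`3δ`, to which the same bound applies, while each ball of a packing contains a piece of `K` of size
comparable to `δ`, hence of `s`-dimensional measure at least a constant times `δ ^ s`.
-/

section Similarity

variable {X : Type*} [MetricSpace X] {f g : X → X} {a b : ℝ≥0}

namespace IsSimilarity

theorem id : IsSimilarity (id : X → X) ((1 : ℝ≥0) : ℝ) := fun x y => by simp

theorem comp (hf : IsSimilarity f a) (hg : IsSimilarity g b) :
    IsSimilarity (f ∘ g) ((a * b : ℝ≥0) : ℝ) := fun x y => by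
  rw [Function.comp_apply, Function.comp_apply, hf, hg, NNReal.coe_mul, mul_assoc]

theorem lipschitzWith (hf : IsSimilarity f a) : LipschitzWith a f :=
  LipschitzWith.of_dist_le_mul fun x y => (hf x y).le

theorem antilipschitzWith (hf : IsSimilarity f a) (ha : 0 < a) : AntilipschitzWith a⁻¹ f :=
  AntilipschitzWith.of_le_mul_dist fun x y => by
    rw [hf, NNReal.coe_inv, inv_mul_cancel_left₀ (NNReal.coe_pos.2 ha).ne']

theorem measurableEmbedding [CompleteSpace X] [MeasurableSpace X] [BorelSpace X]
    (hf : IsSimilarity f a) (ha : 0 < a) : MeasurableEmbedding f :=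
  ((hf.antilipschitzWith ha).isClosedEmbedding
    hf.lipschitzWith.uniformContinuous).measurableEmbedding

theorem ediam_image (hf : IsSimilarity f a) (ha : 0 < a) (S : Set X) :
    ediam (f '' S) = a * ediam S := by
  refine le_antisymm (hf.lipschitzWith.ediam_image_le S) ?_
  have h := (hf.antilipschitzWith ha).le_mul_ediam_image S
  rwa [ENNReal.coe_inv ha.ne', mul_comm, ← div_eq_mul_inv,
    ENNReal.le_div_iff_mul_le (by simp [ha.ne']) (by simp), mul_comm] at h

theorem diam_image (hf : IsSimilarity f a) (ha : 0 < a) (S : Set X) :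
    Metric.diam (f '' S) = a * Metric.diam S := by
  simp [Metric.diam, hf.ediam_image ha]

theorem hausdorffMeasure_image [MeasurableSpace X] [BorelSpace X] (hf : IsSimilarity f a)
    (ha : 0 < a) {t : ℝ} (ht : 0 ≤ t) (S : Set X) :
    μH[t] (f '' S) = (a : ℝ≥0∞) ^ t * μH[t] S := by
  refine le_antisymm (hf.lipschitzWith.hausdorffMeasure_image_le ht S) ?_
  have h := (hf.antilipschitzWith ha).le_hausdorffMeasure_image ht S
  rwa [ENNReal.coe_inv ha.ne', ENNReal.inv_rpow, mul_comm, ← div_eq_mul_inv,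
    ENNReal.le_div_iff_mul_le (by simp [ha.ne']) (by simp [ha.ne']), mul_comm] at h

end IsSimilarity

end Similarity

section Exponent

variable {ι : Type*} {c : ι → ℝ≥0} {s t : ℝ}

theorem exists_ratio_bounds [Finite ι] (hc0 : ∀ i, 0 < c i) (hc1 : ∀ i, c i < 1) :
    ∃ a b : ℝ≥0, 0 < a ∧ b < 1 ∧ ∀ i, c i ∈ Icc a b := by
  cases isEmpty_or_nonempty ι
  · exact ⟨1, 0, one_pos, zero_lt_one, isEmptyElim⟩
  · obtain ⟨i, hi⟩ := Finite.exists_min c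
    obtain ⟨j, hj⟩ := Finite.exists_max c
    exact ⟨c i, c j, hc0 i, hc1 j, fun l => ⟨hi l, hj l⟩⟩

variable [Fintype ι]

theorem sum_coe_rpow (hc0 : ∀ i, 0 < c i) :
    ∑ i, (c i : ℝ≥0∞) ^ t = ((∑ i, c i ^ t : ℝ≥0) : ℝ≥0∞) := by
  simp [ENNReal.coe_rpow_of_ne_zero (hc0 _).ne']

theorem exponent_pos (hcard : 1 < Fintype.card ι) (hc0 : ∀ i, 0 < c i) (hc1 : ∀ i, c i < 1)
    (hsum : ∑ i, c i ^ s = 1) : 0 < s := by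
  by_contra! hs
  have hle : (Fintype.card ι : ℝ≥0) ≤ ∑ i, c i ^ s := by
    simpa using Finset.card_nsmul_le_sum Finset.univ (fun i => c i ^ s) 1 fun i _ =>
      NNReal.one_le_rpow_of_pos_of_le_one_of_nonpos (hc0 i) (hc1 i).le hs
  rw [hsum, Nat.cast_le_one] at hle
  omega

theorem sum_rpow_lt_one (hc0 : ∀ i, 0 < c i) (hc1 : ∀ i, c i < 1) (hsum : ∑ i, c i ^ s = 1)
    (hst : s < t) : ∑ i, c i ^ t < 1 := by
  have hne : (Finset.univ : Finset ι).Nonempty :=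
    Finset.nonempty_of_sum_ne_zero (hsum ▸ one_ne_zero)
  rw [← hsum]
  exact Finset.sum_lt_sum_of_nonempty hne fun i _ =>
    NNReal.rpow_lt_rpow_of_exponent_gt (hc0 i) (hc1 i) hst

end Exponent

section Words

variable {X : Type*} {k n : ℕ} {f : Fin k → X → X} {K : Set X}

theorem wordComp_elim0 : wordComp f Fin.elim0 = id := rfl

theorem wordComp_cons (i : Fin k) (ω : Fin n → Fin k) :
    wordComp f (Fin.cons i ω : Fin (n + 1) → Fin k) = f i ∘ wordComp f ω := by
  simp [wordComp, List.ofFn_succ]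

theorem wordComp_image_subset (hK : ∀ i, f i '' K ⊆ K) (ω : Fin n → Fin k) :
    wordComp f ω '' K ⊆ K := by
  induction ω using Fin.consInduction with
  | elim0 => simp [wordComp_elim0]
  | cons i ω ih =>
    rw [wordComp_cons, image_comp]
    exact (image_mono ih).trans (hK i)

theorem exists_mem_wordComp_image (hK : K ⊆ ⋃ i, f i '' K) {x : X} (hx : x ∈ K) (n : ℕ) :
    ∃ ω : Fin n → Fin k, x ∈ wordComp f ω '' K := by
  induction n generalizing x with
  | zero => exact ⟨Fin.elim0, by simpa [wordComp_elim0] using hx⟩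
  | succ n ih =>
    obtain ⟨i, y, hy, rfl⟩ := mem_iUnion.1 (hK hx)
    obtain ⟨ω, hω⟩ := ih hy
    exact ⟨Fin.cons i ω, by rw [wordComp_cons, image_comp]; exact mem_image_of_mem _ hω⟩

variable {c : Fin k → ℝ≥0}

theorem exists_wordComp_ratio_mem_Icc (hc0 : ∀ i, 0 < c i) (hc1 : ∀ i, c i < 1)
    {a : ℝ≥0} (hac : ∀ i, a ≤ c i) (hK : K ⊆ ⋃ i, f i '' K) {x : X} (hx : x ∈ K)
    {ε : ℝ≥0} (hε : 0 < ε) (hε1 : ε ≤ 1) :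
    ∃ (n : ℕ) (ω : Fin n → Fin k), x ∈ wordComp f ω '' K ∧ ∏ j, c (ω j) ∈ Icc (a * ε) ε := by
  obtain ⟨_, b, -, hb1, hcb⟩ := exists_ratio_bounds hc0 hc1
  obtain ⟨m, hm⟩ : ∃ m, b ^ m < ε := NNReal.exists_pow_lt_of_lt_one hε hb1
  induction m generalizing x ε with
  | zero => exact absurd hε1 (by simpa using hm)
  | succ m ih =>
    obtain ⟨i, y, hy, rfl⟩ := mem_iUnion.1 (hK hx)
    rcases le_or_gt (c i) ε with hi | hi
    · refine ⟨1, fun _ => i, ⟨y, hy, by simp [wordComp]⟩, ?_, by simpa using hi⟩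
      simpa using (mul_le_of_le_one_right' hε1).trans (hac i)
    · have hm' : b ^ m < ε / c i := by
        rw [lt_div_iff₀ (hc0 i)]
        calc b ^ m * c i ≤ b ^ m * b := by gcongr; exact (hcb i).2
          _ < ε := by rwa [← pow_succ]
      obtain ⟨n, ω, hω, hlow, hup⟩ :=
        ih hy (div_pos hε (hc0 i)) ((div_le_one (hc0 i)).2 hi.le) hm'
      refine ⟨n + 1, Fin.cons i ω, ?_, ?_⟩
      · rw [wordComp_cons, image_comp]
        exact mem_image_of_mem _ hω
      · rw [← mul_div_assoc, div_le_iff₀' (hc0 i)] at hlow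
        rw [le_div_iff₀' (hc0 i)] at hup
        simpa [Fin.prod_univ_succ] using ⟨hlow, hup⟩

variable [MetricSpace X]

theorem isSimilarity_wordComp (hf : ∀ i, IsSimilarity (f i) (c i)) (ω : Fin n → Fin k) :
    IsSimilarity (wordComp f ω) ((∏ j, c (ω j) : ℝ≥0) : ℝ) := by
  induction ω using Fin.consInduction with
  | elim0 => simpa [wordComp_elim0] using IsSimilarity.id
  | cons i ω ih =>
    rw [wordComp_cons, Fin.prod_univ_succ]
    simpa using (hf i).comp ih

theorem diam_wordComp_image (hc0 : ∀ i, 0 < c i) (hf : ∀ i, IsSimilarity (f i) (c i))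
    (ω : Fin n → Fin k) :
    Metric.diam (wordComp f ω '' K) = (∏ j, c (ω j) : ℝ≥0) * Metric.diam K :=
  (isSimilarity_wordComp hf ω).diam_image (Finset.prod_pos fun _ _ => hc0 _) K

theorem diam_wordComp_image_le (hc0 : ∀ i, 0 < c i) (hf : ∀ i, IsSimilarity (f i) (c i))
    {b : ℝ≥0} (hb : b ≤ 1) (hcb : ∀ i, c i ≤ b) {m : ℕ} (hnm : n ≤ m) (ω : Fin m → Fin k) :
    Metric.diam (wordComp f ω '' K) ≤ b ^ n * Metric.diam K := by
  rw [diam_wordComp_image hc0 hf]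
  gcongr
  calc ((∏ j, c (ω j) : ℝ≥0) : ℝ) ≤ (b ^ m : ℝ≥0) :=
        NNReal.coe_le_coe.2 <| (Finset.prod_le_pow_card _ _ b fun j _ => hcb (ω j)).trans_eq
          (by simp)
    _ ≤ (b : ℝ) ^ n := by
        rw [NNReal.coe_pow]
        exact pow_le_pow_of_le_one b.2 hb hnm

theorem one_lt_of_eq_iUnion_image (hc0 : ∀ i, 0 < c i) (hc1 : ∀ i, c i < 1)
    (hf : ∀ i, IsSimilarity (f i) (c i)) (hK : K = ⋃ i, f i '' K) (hdiam : 0 < Metric.diam K) :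
    1 < k := by
  match k with
  | 0 =>
    have hK0 : K = ∅ := hK.trans (iUnion_of_empty _)
    simp [hK0] at hdiam
  | 1 =>
    have hK0 : K = f 0 '' K := hK.trans (iSup_unique _)
    have hdiam_eq := (hf 0).diam_image (hc0 0) K
    rw [← hK0] at hdiam_eq
    exact absurd hdiam_eq (mul_lt_of_lt_one_left hdiam (hc1 0)).ne'
  | k + 2 => omega

end Words

section FractalMeasures

variable {X : Type*} [MetricSpace X] {k : ℕ} {f : Fin k → X → X} {c : Fin k → ℝ≥0} {K : Set X}
  {s t : ℝ}

theorem hausdorffMeasure_le_H6 [MeasurableSpace X] [BorelSpace X]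
    (hf : ∀ i, IsSimilarity (f i) (c i)) (hK : Bornology.IsBounded K) (t : ℝ) :
    μH[t] K ≤ H6 f K t := by
  refine le_of_forall_gt_imp_ge_of_dense fun y hy => ?_
  have hcover (n : ℕ) : ∃ 𝒜 : Set (Set X), (𝒜.Countable ∧
      (∀ A ∈ 𝒜, (∃ m, ∃ ω : Fin m → Fin k, A = wordComp f ω '' K) ∧
        Metric.diam A ≤ 1 / ((n : ℝ) + 1)) ∧ K ⊆ ⋃₀ 𝒜) ∧
      ∑' A : 𝒜, ENNReal.ofReal (Metric.diam (A : Set X)) ^ t < y := by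
    simpa only [iInf_lt_iff, exists_prop] using
      (le_iSup₂ (1 / ((n : ℝ) + 1)) Nat.one_div_pos_of_nat).trans_lt hy
  choose 𝒜 h𝒜 hlt using hcover
  have (n : ℕ) : Countable (𝒜 n) := (h𝒜 n).1
  have hediam (n : ℕ) (A : 𝒜 n) :
      ediam (A : Set X) = ENNReal.ofReal (Metric.diam (A : Set X)) := by
    obtain ⟨m, ω, hA⟩ := ((h𝒜 n).2.1 A A.2).1
    rw [hA, Metric.diam, ENNReal.ofReal_toReal]
    exact ((isSimilarity_wordComp hf ω).lipschitzWith.isBounded_image hK).ediam_ne_top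
  have hr : Tendsto (fun n : ℕ => ENNReal.ofReal (1 / ((n : ℝ) + 1))) atTop (𝓝 0) := by
    simpa using ENNReal.tendsto_ofReal (tendsto_one_div_add_atTop_nhds_zero_nat (𝕜 := ℝ))
  calc μH[t] K ≤ liminf (fun n => ∑' A : 𝒜 n, ediam (A : Set X) ^ t) atTop := by
        refine Measure.hausdorffMeasure_le_liminf_tsum (ι := fun n => 𝒜 n) t K _ hr
          (fun n A => (A : Set X)) (.of_forall fun n A => ?_) (.of_forall fun n => ?_)
        · rw [hediam]
          exact ENNReal.ofReal_le_ofReal ((h𝒜 n).2.1 A A.2).2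
        · rw [← sUnion_eq_iUnion]
          exact (h𝒜 n).2.2
    _ ≤ y := by
        simp only [hediam]
        exact liminf_le_of_frequently_le' (.of_forall fun n => (hlt n).le)

theorem H6_le_H5 (hc0 : ∀ i, 0 < c i) (hc1 : ∀ i, c i < 1)
    (hf : ∀ i, IsSimilarity (f i) (c i)) (t : ℝ) : H6 f K t ≤ H5 f K t := by
  obtain ⟨_, b, -, hb1, hcb⟩ := exists_ratio_bounds hc0 hc1
  refine iSup₂_le fun δ hδ => ?_
  have hlim : Tendsto (fun n : ℕ => (b : ℝ) ^ n * Metric.diam K) atTop (𝓝 0) := by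
    simpa using (tendsto_pow_atTop_nhds_zero_of_lt_one b.2 hb1).mul_const (Metric.diam K)
  obtain ⟨n, hn⟩ := (hlim.eventually_lt_const hδ).exists
  refine le_iSup_of_le n (le_iInf₂ fun 𝒜 h𝒜 => ?_)
  refine iInf₂_le 𝒜 ⟨h𝒜.1, fun A hA => ?_, h𝒜.2.2⟩
  obtain ⟨m, hm, ω, rfl⟩ := h𝒜.2.1 A hA
  exact ⟨⟨m, ω, rfl⟩,
    (diam_wordComp_image_le hc0 hf hb1.le (fun i => (hcb i).2) hm ω).trans hn.le⟩

theorem H5_le_H4 (t : ℝ) : H5 f K t ≤ H4 f K t :=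
  iSup_mono fun _ => le_iInf₂ fun 𝒜 h𝒜 => iInf₂_le 𝒜 ⟨h𝒜.1.countable, h𝒜.2⟩

theorem H4_le_H3 (hK : K ⊆ ⋃ i, f i '' K) (t : ℝ) : H4 f K t ≤ H3 f K t := by
  refine iSup_mono fun n => le_iInf fun ⟨m, hm⟩ => ?_
  refine iInf₂_le_of_le (range fun ω : Fin m → Fin k => wordComp f ω '' K)
    ⟨finite_range _, ?_, fun x hx => ?_⟩ ?_
  · rintro _ ⟨ω, rfl⟩
    exact ⟨m, hm, ω, rfl⟩
  · obtain ⟨ω, hω⟩ := exists_mem_wordComp_image hK hx m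
    exact mem_sUnion.2 ⟨_, mem_range_self ω, hω⟩
  · rw [← tsum_fintype (L := SummationFilter.unconditional _)]
    exact ENNReal.tsum_le_tsum_comp_of_surjective
      (rangeFactorization_surjective (f := fun ω : Fin m → Fin k => wordComp f ω '' K))
      fun A => ENNReal.ofReal (Metric.diam (A : Set X)) ^ t

theorem sum_diam_wordComp_image_rpow (hc0 : ∀ i, 0 < c i) (hf : ∀ i, IsSimilarity (f i) (c i))
    (t : ℝ) (m : ℕ) :
    ∑ ω : Fin m → Fin k, ENNReal.ofReal (Metric.diam (wordComp f ω '' K)) ^ t =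
      ((∑ i, c i ^ t : ℝ≥0) : ℝ≥0∞) ^ m * ENNReal.ofReal (Metric.diam K) ^ t := by
  have hpiece (ω : Fin m → Fin k) : ENNReal.ofReal (Metric.diam (wordComp f ω '' K)) ^ t =
      (∏ j, (c (ω j) : ℝ≥0∞) ^ t) * ENNReal.ofReal (Metric.diam K) ^ t := by
    rw [diam_wordComp_image hc0 hf, ENNReal.ofReal_mul NNReal.zero_le_coe,
      ENNReal.ofReal_coe_nnreal, ENNReal.mul_rpow_of_ne_top ENNReal.coe_ne_top
        ENNReal.ofReal_ne_top, ENNReal.ofNNReal_finsetProd,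
      ENNReal.prod_rpow_of_ne_top fun _ _ => ENNReal.coe_ne_top]
  simp_rw [hpiece]
  rw [← Finset.sum_mul, ← Fintype.sum_pow fun i => (c i : ℝ≥0∞) ^ t, sum_coe_rpow hc0]

theorem H3_eq_diam_rpow (hc0 : ∀ i, 0 < c i) (hf : ∀ i, IsSimilarity (f i) (c i))
    (hsum : ∑ i, c i ^ s = 1) : H3 f K s = ENNReal.ofReal (Metric.diam K) ^ s := by
  have (n : ℕ) : Nonempty {m : ℕ // n ≤ m} := ⟨⟨n, le_rfl⟩⟩
  simp [H3, H3pre, sum_diam_wordComp_image_rpow hc0 hf, hsum]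

theorem H3_eq_zero (hc0 : ∀ i, 0 < c i) (hf : ∀ i, IsSimilarity (f i) (c i)) (ht : 0 ≤ t)
    (hsum : ∑ i, c i ^ t < 1) : H3 f K t = 0 := by
  have hlim : Tendsto (fun m : ℕ => ((∑ i, c i ^ t : ℝ≥0) : ℝ≥0∞) ^ m *
      ENNReal.ofReal (Metric.diam K) ^ t) atTop (𝓝 0) := by
    simpa using ENNReal.Tendsto.mul_const
      (ENNReal.tendsto_pow_atTop_nhds_zero_of_lt_one (by exact_mod_cast hsum))
      (Or.inr (ENNReal.rpow_ne_top_of_nonneg ht ENNReal.ofReal_ne_top))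
  refine nonpos_iff_eq_zero.1 (iSup_le fun n => ge_of_tendsto hlim ?_)
  filter_upwards [eventually_ge_atTop n] with m hm
  exact (iInf_le _ ⟨m, hm⟩).trans_eq (sum_diam_wordComp_image_rpow hc0 hf t m)

end FractalMeasures

section Feasible

variable {X ι : Type*} [MeasurableSpace X] {f : ι → X → X} {V : Set X}

/-- The open set condition for `V`, with openness and nonemptiness of `V` relaxed to
measurability: the separation argument only sees `V` through its measure. -/
structure IsFeasibleSet [Bornology X] (f : ι → X → X) (V : Set X) : Prop where
  measurableSet : MeasurableSet V
  isBounded : Bornology.IsBounded V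
  image_subset : ∀ i, f i '' V ⊆ V
  pairwise_disjoint : Pairwise fun i j => Disjoint (f i '' V) (f j '' V)

theorem IsFeasibleSet.sum_measure_image_comp_le [Bornology X] [Fintype ι]
    (hV : IsFeasibleSet f V) (hf : ∀ i, MeasurableEmbedding (f i)) {g : X → X}
    (hg : MeasurableEmbedding g) (μ : Measure X) :
    ∑ i, μ ((g ∘ f i) '' V) ≤ μ (g '' V) := by
  have hdisj : Pairwise fun i j => Disjoint ((g ∘ f i) '' V) ((g ∘ f j) '' V) := fun i j hij => by
    simpa only [image_comp] using
      (disjoint_image_iff hg.injective).2 (hV.pairwise_disjoint hij)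
  rw [← tsum_fintype (L := SummationFilter.unconditional _), ← measure_iUnion hdisj fun i =>
    (hg.comp (hf i)).measurableSet_image' hV.measurableSet]
  refine measure_mono (iUnion_subset fun i => ?_)
  rw [image_comp]
  exact image_mono (hV.image_subset i)

end Feasible

section BallContent

variable {X : Type*} [MetricSpace X] {K : Set X} {s : ℝ}

/-- The `s`-dimensional content of `K` with respect to finite covers by open balls of positive
radius, each ball counted with its radius instead of its diameter. -/
def ballContent (s : ℝ) (K : Set X) : ℝ≥0∞ :=
  ⨅ (J : Finset (X × ℝ≥0)) (_ : (∀ p ∈ J, 0 < p.2) ∧ K ⊆ ⋃ p ∈ J, ball p.1 p.2),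
    ∑ p ∈ J, (p.2 : ℝ≥0∞) ^ s

theorem ballContent_le_sum {ι : Type*} (J : Finset ι) (x : ι → X) (r : ι → ℝ≥0)
    (hr : ∀ j ∈ J, 0 < r j) (hK : K ⊆ ⋃ j ∈ J, ball (x j) (r j)) :
    ballContent s K ≤ ∑ j ∈ J, (r j : ℝ≥0∞) ^ s := by
  classical
  refine (iInf₂_le (J.image fun j => (x j, r j)) ⟨?_, ?_⟩).trans
    (Finset.sum_image_le_of_nonneg fun _ _ => zero_le)
  · simpa using hr
  · simpa using hK

theorem exists_nnreal_gt_rpow_lt {x ε : ℝ≥0∞} (hx : x ≠ ⊤) (hs : 0 < s) (hε : ε ≠ 0) :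
    ∃ r : ℝ≥0, x < r ∧ (r : ℝ≥0∞) ^ s < x ^ s + ε := by
  have hlt : x < (x ^ s + ε) ^ s⁻¹ := (ENNReal.lt_rpow_inv_iff hs).2
    (ENNReal.lt_add_right (ENNReal.rpow_ne_top_of_nonneg hs.le hx) hε)
  obtain ⟨r, hxr, hr⟩ := ENNReal.lt_iff_exists_nnreal_btwn.1 hlt
  exact ⟨r, hxr, (ENNReal.lt_rpow_inv_iff hs).1 hr⟩

theorem exists_subset_ball_rpow_lt [Nonempty X] (hs : 0 < s) {S : Set X} (hS : ediam S ≠ ⊤)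
    {ε : ℝ≥0∞} (hε : ε ≠ 0) :
    ∃ (x : X) (r : ℝ≥0), 0 < r ∧ S ⊆ ball x r ∧ (r : ℝ≥0∞) ^ s < ediam S ^ s + ε := by
  obtain ⟨r, hSr, hr⟩ := exists_nnreal_gt_rpow_lt hS hs hε
  have hr0 : 0 < r := ENNReal.coe_pos.1 (bot_le.trans_lt hSr)
  rcases S.eq_empty_or_nonempty with rfl | ⟨x, hx⟩
  · exact ⟨Classical.arbitrary X, r, hr0, empty_subset _, hr⟩
  · refine ⟨x, r, hr0, fun y hy => ?_, hr⟩
    rw [← Metric.eball_coe]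
    exact (edist_le_ediam_of_mem hy hx).trans_lt hSr

theorem ballContent_le_tsum_ediam (hK : IsCompact K) (hs : 0 < s) {t : ℕ → Set X}
    (hcover : K ⊆ ⋃ n, t n) (ht : ∀ n, ediam (t n) ≠ ⊤) :
    ballContent s K ≤ ∑' n, ediam (t n) ^ s := by
  rcases K.eq_empty_or_nonempty with rfl | ⟨x₀, -⟩
  · exact (ballContent_le_sum ∅ Prod.fst Prod.snd (by simp) (empty_subset _)).trans (by simp)
  have : Nonempty X := ⟨x₀⟩
  refine ENNReal.le_of_forall_pos_le_add fun ε hε _ => ?_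
  obtain ⟨η, hη0, hη⟩ := ENNReal.exists_pos_sum_of_countable (ENNReal.coe_pos.2 hε).ne' ℕ
  choose x r hr0 htr hr using fun n =>
    exists_subset_ball_rpow_lt hs (ht n) (ENNReal.coe_pos.2 (hη0 n)).ne'
  obtain ⟨J, hJ⟩ := hK.elim_finite_subcover (fun n => ball (x n) (r n)) (fun n => isOpen_ball)
    (hcover.trans (iUnion_mono htr))
  calc ballContent s K ≤ ∑ n ∈ J, (r n : ℝ≥0∞) ^ s :=
        ballContent_le_sum J x r (fun n _ => hr0 n) hJ
    _ ≤ ∑' n, (r n : ℝ≥0∞) ^ s := ENNReal.sum_le_tsum J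
    _ ≤ ∑' n, (ediam (t n) ^ s + η n) := ENNReal.tsum_le_tsum fun n => (hr n).le
    _ = ∑' n, ediam (t n) ^ s + ∑' n, (η n : ℝ≥0∞) := ENNReal.tsum_add
    _ ≤ ∑' n, ediam (t n) ^ s + ε := by gcongr

theorem ballContent_le_hausdorffMeasure [MeasurableSpace X] [BorelSpace X] (hK : IsCompact K)
    (hs : 0 < s) : ballContent s K ≤ μH[s] K := by
  rw [Measure.hausdorffMeasure_apply]
  refine le_iSup₂_of_le 1 one_pos (le_iInf₂ fun t ht => le_iInf fun hdiam => ?_)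
  refine (ballContent_le_tsum_ediam hK hs ht fun n =>
    ((hdiam n).trans_lt ENNReal.one_lt_top).ne).trans (ENNReal.tsum_le_tsum fun n => ?_)
  rcases (t n).eq_empty_or_nonempty with h | h <;> simp [h, hs]

end BallContent

section MoranBound

variable {X : Type*} [MetricSpace X] {k : ℕ}
  {f : Fin k → X → X} {c : Fin k → ℝ≥0} {K V : Set X} {s Q : ℝ} {a b D : ℝ≥0}

theorem IsSimilarity.image_subset_closedBall {g : X → X} {ρ r : ℝ≥0} (hg : IsSimilarity g ρ)
    (hρr : ρ ≤ r) {x : X} (hx : (g '' K ∩ ball x r).Nonempty)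
    (hD : ∀ y ∈ V, ∀ z ∈ K, dist y z ≤ D) : g '' V ⊆ closedBall x ((1 + D) * r : ℝ≥0) := by
  obtain ⟨_, ⟨z, hz, rfl⟩, hzx⟩ := hx
  rintro _ ⟨y, hy, rfl⟩
  calc dist (g y) x ≤ dist (g y) (g z) + dist (g z) x := dist_triangle _ _ _
    _ ≤ r * D + r := by
        rw [hg]
        gcongr
        exacts [hD y hy z hz, (mem_ball.1 hzx).le]
    _ = ((1 + D) * r : ℝ≥0) := by push_cast; ring

variable [MeasurableSpace X]

/-- Upper Ahlfors regularity with exponent `Q`, i.e. polynomial growth of the measure of balls. -/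
def IsUpperAhlforsRegular (μ : Measure X) (Q : ℝ) : Prop :=
  ∃ B : ℝ≥0, ∀ (x : X) (r : ℝ≥0), μ (closedBall x r) ≤ B * (r : ℝ≥0∞) ^ Q

theorem rpow_mul_measure_restrict_closedBall_le {μ : Measure X} {B : ℝ≥0}
    (hB : ∀ (x : X) (r : ℝ≥0), μ (closedBall x r) ≤ B * (r : ℝ≥0∞) ^ Q) (hQ : 0 ≤ Q) (x : X)
    {r : ℝ≥0} (hr : 0 < r) (S : Set X) :
    (r : ℝ≥0∞) ^ (s - Q) * μ.restrict (closedBall x (D * r : ℝ≥0)) S ≤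
      (r : ℝ≥0∞) ^ s * (B * (D : ℝ≥0∞) ^ Q) := by
  calc (r : ℝ≥0∞) ^ (s - Q) * μ.restrict (closedBall x (D * r : ℝ≥0)) S
      ≤ (r : ℝ≥0∞) ^ (s - Q) * (B * ((D * r : ℝ≥0) : ℝ≥0∞) ^ Q) := by
        gcongr
        exact (measure_mono (subset_univ S)).trans (by simpa using hB x (D * r))
    _ = (r : ℝ≥0∞) ^ (s - Q + Q) * (B * (D : ℝ≥0∞) ^ Q) := by
        rw [ENNReal.rpow_add _ _ (ENNReal.coe_ne_zero.2 hr.ne') ENNReal.coe_ne_top,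
          ENNReal.coe_mul, ENNReal.mul_rpow_of_nonneg _ _ hQ]
        ring
    _ = (r : ℝ≥0∞) ^ s * (B * (D : ℝ≥0∞) ^ Q) := by rw [sub_add_cancel]

variable [BorelSpace X]

theorem IsSimilarity.rpow_mul_le_sum_of_le_radius {g : X → X} {ρ : ℝ≥0} (hg : IsSimilarity g ρ)
    (hρ : 0 < ρ) (hs : 0 ≤ s) (hQ : 0 ≤ Q) (hD : ∀ y ∈ V, ∀ z ∈ K, dist y z ≤ D)
    {J : Finset (X × ℝ≥0)} {p : X × ℝ≥0} (hp : p ∈ J) (hap : a * p.2 ≤ ρ) (hρp : ρ ≤ p.2)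
    (hmeet : (g '' K ∩ ball p.1 p.2).Nonempty) :
    (ρ : ℝ≥0∞) ^ s * ((a : ℝ≥0∞) ^ Q * μH[Q] V) ≤ ∑ p ∈ J, (p.2 : ℝ≥0∞) ^ (s - Q) *
      μH[Q].restrict (closedBall p.1 ((1 + D) * p.2 : ℝ≥0)) (g '' V) := by
  have hp0 : (p.2 : ℝ≥0∞) ≠ 0 := ENNReal.coe_ne_zero.2 (hρ.trans_le hρp).ne'
  calc (ρ : ℝ≥0∞) ^ s * ((a : ℝ≥0∞) ^ Q * μH[Q] V)
      ≤ (p.2 : ℝ≥0∞) ^ (s - Q + Q) * ((a : ℝ≥0∞) ^ Q * μH[Q] V) := by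
        rw [sub_add_cancel]
        gcongr
    _ = (p.2 : ℝ≥0∞) ^ (s - Q) * ((a * p.2 : ℝ≥0∞) ^ Q * μH[Q] V) := by
        rw [ENNReal.rpow_add _ _ hp0 ENNReal.coe_ne_top, ENNReal.mul_rpow_of_nonneg _ _ hQ]
        ring
    _ ≤ (p.2 : ℝ≥0∞) ^ (s - Q) * ((ρ : ℝ≥0∞) ^ Q * μH[Q] V) := by
        gcongr
        exact_mod_cast hap
    _ = (p.2 : ℝ≥0∞) ^ (s - Q) *
          μH[Q].restrict (closedBall p.1 ((1 + D) * p.2 : ℝ≥0)) (g '' V) := by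
        rw [Measure.restrict_eq_self _ (hg.image_subset_closedBall hρp hmeet hD),
          hg.hausdorffMeasure_image hρ hQ]
    _ ≤ _ := Finset.single_le_sum (f := fun p : X × ℝ≥0 => (p.2 : ℝ≥0∞) ^ (s - Q) *
        μH[Q].restrict (closedBall p.1 ((1 + D) * p.2 : ℝ≥0)) (g '' V)) (fun _ _ => zero_le) hp

theorem IsFeasibleSet.rpow_mul_le_sum_of_forall_comp [CompleteSpace X] (hV : IsFeasibleSet f V)
    (hc0 : ∀ i, 0 < c i) (hf : ∀ i, IsSimilarity (f i) (c i)) (hsum : ∑ i, c i ^ s = 1)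
    {g : X → X} (hg : MeasurableEmbedding g) {ι : Type*} (J : Finset ι) (w : ι → ℝ≥0∞)
    (μ : ι → Measure X) {ρ : ℝ≥0} {m : ℝ≥0∞}
    (h : ∀ i, ((ρ * c i : ℝ≥0) : ℝ≥0∞) ^ s * m ≤ ∑ j ∈ J, w j * μ j ((g ∘ f i) '' V)) :
    (ρ : ℝ≥0∞) ^ s * m ≤ ∑ j ∈ J, w j * μ j (g '' V) := by
  calc (ρ : ℝ≥0∞) ^ s * m = ∑ i, ((ρ * c i : ℝ≥0) : ℝ≥0∞) ^ s * m := by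
        simp_rw [ENNReal.coe_mul, ENNReal.mul_rpow_of_ne_top ENNReal.coe_ne_top ENNReal.coe_ne_top]
        rw [← Finset.sum_mul, ← Finset.mul_sum, sum_coe_rpow hc0, hsum, ENNReal.coe_one, mul_one]
    _ ≤ ∑ i, ∑ j ∈ J, w j * μ j ((g ∘ f i) '' V) := Finset.sum_le_sum fun i _ => h i
    _ = ∑ j ∈ J, w j * ∑ i, μ j ((g ∘ f i) '' V) := by
        rw [Finset.sum_comm]
        simp_rw [Finset.mul_sum]
    _ ≤ ∑ j ∈ J, w j * μ j (g '' V) := by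
        gcongr with j
        exact hV.sum_measure_image_comp_le (fun i => (hf i).measurableEmbedding (hc0 i)) hg (μ j)

theorem IsFeasibleSet.rpow_mul_le_sum_measure_restrict_image [CompleteSpace X]
    (hV : IsFeasibleSet f V) (hc0 : ∀ i, 0 < c i) (hf : ∀ i, IsSimilarity (f i) (c i))
    (hcI : ∀ i, c i ∈ Icc a b) (hK : ∀ i, f i '' K ⊆ K) (hne : K.Nonempty)
    (hD : ∀ y ∈ V, ∀ z ∈ K, dist y z ≤ D) (hs : 0 ≤ s) (hQ : 0 ≤ Q) (hsum : ∑ i, c i ^ s = 1)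
    (J : Finset (X × ℝ≥0)) (n : ℕ) {g : X → X} {ρ : ℝ≥0} (hg : IsSimilarity g ρ) (hρ : 0 < ρ)
    (hJ : g '' K ⊆ ⋃ p ∈ J, ball p.1 p.2)
    (hJa : ∀ p ∈ J, (g '' K ∩ ball p.1 p.2).Nonempty → a * p.2 ≤ ρ)
    (hJb : ∀ p ∈ J, b ^ n * ρ ≤ p.2) :
    (ρ : ℝ≥0∞) ^ s * ((a : ℝ≥0∞) ^ Q * μH[Q] V) ≤ ∑ p ∈ J, (p.2 : ℝ≥0∞) ^ (s - Q) *
      μH[Q].restrict (closedBall p.1 ((1 + D) * p.2 : ℝ≥0)) (g '' V) := by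
  induction n generalizing g ρ with
  | zero =>
    obtain ⟨z, hz⟩ := hne.image g
    obtain ⟨p, hp, hzp⟩ := mem_iUnion₂.1 (hJ hz)
    have hmeet : (g '' K ∩ ball p.1 p.2).Nonempty := ⟨z, hz, hzp⟩
    exact hg.rpow_mul_le_sum_of_le_radius hρ hs hQ hD hp (hJa p hp hmeet)
      (by simpa using hJb p hp) hmeet
  | succ n ih =>
    by_cases hlarge : ∃ p ∈ J, (g '' K ∩ ball p.1 p.2).Nonempty ∧ ρ ≤ p.2
    · obtain ⟨p, hp, hmeet, hρp⟩ := hlarge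
      exact hg.rpow_mul_le_sum_of_le_radius hρ hs hQ hD hp (hJa p hp hmeet) hρp hmeet
    push Not at hlarge
    refine hV.rpow_mul_le_sum_of_forall_comp hc0 hf hsum (hg.measurableEmbedding hρ) J _ _
      fun i => ?_
    have hsub : (g ∘ f i) '' K ⊆ g '' K := by
      rw [image_comp]
      exact image_mono (hK i)
    refine ih (hg.comp (hf i)) (mul_pos hρ (hc0 i)) (hsub.trans hJ) (fun p hp hmeet => ?_)
      fun p hp => ?_
    · rw [mul_comm ρ]
      gcongr
      exacts [(hcI i).1, (hlarge p hp (hmeet.mono (inter_subset_inter_left _ hsub))).le]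
    · calc b ^ n * (ρ * c i) ≤ b ^ n * (ρ * b) := by gcongr; exact (hcI i).2
        _ = b ^ (n + 1) * ρ := by ring
        _ ≤ p.2 := hJb p hp

theorem IsFeasibleSet.rpow_mul_measure_le_sum_rpow_mul [CompleteSpace X] (hV : IsFeasibleSet f V)
    (hf : ∀ i, IsSimilarity (f i) (c i)) (ha : 0 < a) (hb : b < 1) (hcI : ∀ i, c i ∈ Icc a b)
    (hK : ∀ i, f i '' K ⊆ K) (hne : K.Nonempty) (hD : ∀ y ∈ V, ∀ z ∈ K, dist y z ≤ D)
    (hs : 0 ≤ s) (hQ : 0 ≤ Q) (hsum : ∑ i, c i ^ s = 1) {B : ℝ≥0}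
    (hB : ∀ (x : X) (r : ℝ≥0), μH[Q] (closedBall x r) ≤ B * (r : ℝ≥0∞) ^ Q)
    {J : Finset (X × ℝ≥0)} (hJI : ∀ p ∈ J, p.2 ∈ Ioc 0 1) (hJ : K ⊆ ⋃ p ∈ J, ball p.1 p.2) :
    (a : ℝ≥0∞) ^ Q * μH[Q] V ≤
      (∑ p ∈ J, (p.2 : ℝ≥0∞) ^ s) * (B * ((1 + D : ℝ≥0) : ℝ≥0∞) ^ Q) := by
  have ha1 : a ≤ 1 := by
    obtain ⟨i, -⟩ := Finset.nonempty_of_sum_ne_zero (hsum ▸ one_ne_zero)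
    exact ((hcI i).1.trans (hcI i).2).trans hb.le
  obtain ⟨n, hn⟩ : ∃ n : ℕ, ∀ p ∈ J, b ^ n ≤ p.2 :=
    ((Finset.eventually_all J).2 fun p hp =>
      (NNReal.tendsto_pow_atTop_nhds_zero_of_lt_one hb).eventually_le_const (hJI p hp).1).exists
  calc (a : ℝ≥0∞) ^ Q * μH[Q] V
      ≤ ∑ p ∈ J, (p.2 : ℝ≥0∞) ^ (s - Q) *
          μH[Q].restrict (closedBall p.1 ((1 + D) * p.2 : ℝ≥0)) (id '' V) := by
        simpa using hV.rpow_mul_le_sum_measure_restrict_image (fun i => ha.trans_le (hcI i).1) hf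
          hcI hK hne hD hs hQ hsum J n IsSimilarity.id one_pos (by simpa using hJ)
          (fun p hp _ => mul_le_one' ha1 (hJI p hp).2) (by simpa using hn)
    _ ≤ ∑ p ∈ J, (p.2 : ℝ≥0∞) ^ s * (B * ((1 + D : ℝ≥0) : ℝ≥0∞) ^ Q) :=
        Finset.sum_le_sum fun p hp =>
          rpow_mul_measure_restrict_closedBall_le hB hQ p.1 (hJI p hp).1 _
    _ = (∑ p ∈ J, (p.2 : ℝ≥0∞) ^ s) * (B * ((1 + D : ℝ≥0) : ℝ≥0∞) ^ Q) :=
        (Finset.sum_mul ..).symm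

theorem IsFeasibleSet.ballContent_pos [CompleteSpace X] (hV : IsFeasibleSet f V)
    (hc0 : ∀ i, 0 < c i) (hc1 : ∀ i, c i < 1) (hf : ∀ i, IsSimilarity (f i) (c i))
    (hK : ∀ i, f i '' K ⊆ K) (hne : K.Nonempty) (hbdd : Bornology.IsBounded K) (hs : 0 ≤ s)
    (hsum : ∑ i, c i ^ s = 1) (hQ : 0 ≤ Q)
    (hreg : IsUpperAhlforsRegular (μH[Q] : Measure X) Q) (hVpos : μH[Q] V ≠ 0) :
    0 < ballContent s K := by
  obtain ⟨a, b, ha, hb, hcI⟩ := exists_ratio_bounds hc0 hc1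
  obtain ⟨B, hB⟩ := hreg
  obtain ⟨D, hD⟩ : ∃ D : ℝ≥0, ∀ y ∈ V, ∀ z ∈ K, dist y z ≤ D :=
    ⟨⟨Metric.diam (V ∪ K), Metric.diam_nonneg⟩, fun y hy z hz =>
      dist_le_diam_of_mem (hV.isBounded.union hbdd) (.inl hy) (.inr hz)⟩
  have hm : 0 < (a : ℝ≥0∞) ^ Q * μH[Q] V / (B * ((1 + D : ℝ≥0) : ℝ≥0∞) ^ Q) :=
    ENNReal.div_pos (mul_ne_zero (by simp [ha.ne']) hVpos) (ENNReal.mul_ne_top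
      ENNReal.coe_ne_top (ENNReal.rpow_ne_top_of_nonneg hQ ENNReal.coe_ne_top))
  refine (lt_min one_pos hm).trans_le (le_iInf₂ fun J ⟨hJ0, hJ⟩ => ?_)
  by_cases hlarge : ∃ p ∈ J, 1 < p.2
  · obtain ⟨p, hp, hp1⟩ := hlarge
    calc min 1 _ ≤ (1 : ℝ≥0∞) := min_le_left _ _
      _ = 1 ^ s := (ENNReal.one_rpow s).symm
      _ ≤ (p.2 : ℝ≥0∞) ^ s := by gcongr; exact_mod_cast hp1.le
      _ ≤ ∑ p ∈ J, (p.2 : ℝ≥0∞) ^ s :=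
        Finset.single_le_sum (f := fun p : X × ℝ≥0 => (p.2 : ℝ≥0∞) ^ s) (fun _ _ => zero_le) hp
  · push Not at hlarge
    exact (min_le_right _ _).trans <| ENNReal.div_le_of_le_mul <|
      hV.rpow_mul_measure_le_sum_rpow_mul hf ha hb hcI hK hne hD hs hQ hsum hB
        (fun p hp => ⟨hJ0 p hp, hlarge p hp⟩) hJ

end MoranBound

section BoxDimension

variable {X : Type*} [MetricSpace X] {K : Set X} {s δ : ℝ}

/-- A packing of `K` at scale `δ` as counted by `packingNum`, recorded by the centres of its
balls. -/
def IsBallPacking (K : Set X) (δ : ℝ) (t : Finset X) : Prop :=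
  ↑t ⊆ K ∧ (t : Set X).Pairwise fun x y => Disjoint (closedBall x δ) (closedBall y δ)

theorem bddAbove_card_isBallPacking (hK : TotallyBounded K) (hδ : 0 < δ) :
    BddAbove {m | ∃ t : Finset X, t.card = m ∧ IsBallPacking K δ t} := by
  classical
  obtain ⟨F, hF, hKF⟩ := Metric.totallyBounded_iff.1 hK δ hδ
  refine ⟨hF.toFinset.card, ?_⟩
  rintro _ ⟨t, rfl, htK, hdisj⟩
  have hnear (x : X) (hx : x ∈ t) : ∃ y ∈ F, y ∈ closedBall x δ := by
    obtain ⟨y, hy, hxy⟩ := mem_iUnion₂.1 (hKF (htK hx))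
    exact ⟨y, hy, (mem_ball'.1 hxy).le⟩
  choose! y hyF hy using hnear
  refine Finset.card_le_card_of_injOn y (fun x hx => by simpa using hyF x hx)
    fun x hx x' hx' hxx' => ?_
  by_contra hne
  exact disjoint_left.1 (hdisj hx hx' hne) (hy x hx) (hxx' ▸ hy x' hx')

theorem exists_isBallPacking_card_eq (hK : TotallyBounded K) (hδ : 0 < δ) :
    ∃ t : Finset X, t.card = packingNum K δ ∧ IsBallPacking K δ t :=
  Nat.sSup_mem (s := {m | ∃ t : Finset X, t.card = m ∧ IsBallPacking K δ t})
    ⟨0, ∅, by simp [IsBallPacking]⟩ (bddAbove_card_isBallPacking hK hδ)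

theorem IsBallPacking.card_le_packingNum (hK : TotallyBounded K) (hδ : 0 < δ) {t : Finset X}
    (ht : IsBallPacking K δ t) : t.card ≤ packingNum K δ :=
  le_csSup (bddAbove_card_isBallPacking hK hδ) (Exists.intro t ⟨rfl, ht⟩)

theorem exists_card_eq_packingNum_subset_iUnion_ball (hK : TotallyBounded K) (hδ : 0 < δ) :
    ∃ t : Finset X, t.card = packingNum K δ ∧ K ⊆ ⋃ x ∈ t, ball x (3 * δ) := by
  classical
  obtain ⟨t, htcard, htK, hdisj⟩ := exists_isBallPacking_card_eq hK hδ
  refine ⟨t, htcard, fun x hx => ?_⟩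
  by_contra hfar
  simp only [mem_iUnion, mem_ball, not_exists, not_lt] at hfar
  have hxt : x ∉ t := fun hxt => by linarith [hfar x hxt, dist_self x]
  have hdisjx (y : X) (hy : y ∈ t) : Disjoint (closedBall x δ) (closedBall y δ) :=
    closedBall_disjoint_closedBall (by linarith [hfar y hy])
  have hinsert : IsBallPacking K δ (insert x t) := by
    rw [IsBallPacking, Finset.coe_insert]
    exact ⟨insert_subset hx htK, hdisj.insert fun y hy _ => ⟨hdisjx y hy, (hdisjx y hy).symm⟩⟩
  have hcard := hinsert.card_le_packingNum hK hδ
  rw [Finset.card_insert_of_notMem hxt] at hcard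
  omega

theorem ballContent_le_packingNum_mul (hK : TotallyBounded K) (hδ : 0 < δ) :
    ballContent s K ≤ packingNum K δ * ENNReal.ofReal (3 * δ) ^ s := by
  obtain ⟨t, htcard, hcover⟩ := exists_card_eq_packingNum_subset_iUnion_ball hK hδ
  have hδ' : ((3 * δ).toNNReal : ℝ) = 3 * δ := Real.coe_toNNReal _ (by positivity)
  calc ballContent s K ≤ ∑ _x ∈ t, ((3 * δ).toNNReal : ℝ≥0∞) ^ s :=
        ballContent_le_sum t id _ (fun _ _ => by simpa using hδ) (by simpa [hδ'] using hcover)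
    _ = packingNum K δ * ENNReal.ofReal (3 * δ) ^ s := by
        rw [Finset.sum_const, nsmul_eq_mul, htcard, ENNReal.ofReal]

theorem packingNum_mul_le_measure [MeasurableSpace X] [BorelSpace X] (hK : TotallyBounded K)
    (hδ : 0 < δ) {μ : Measure X} {m : ℝ≥0∞} (hm : ∀ x ∈ K, m ≤ μ (K ∩ closedBall x δ)) :
    packingNum K δ * m ≤ μ K := by
  obtain ⟨t, htcard, htK, hdisj⟩ := exists_isBallPacking_card_eq hK hδ
  calc packingNum K δ * m = ∑ _x ∈ t, m := by rw [Finset.sum_const, nsmul_eq_mul, htcard]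
    _ ≤ ∑ x ∈ t, μ.restrict K (closedBall x δ) := Finset.sum_le_sum fun x hx => by
        rw [Measure.restrict_apply measurableSet_closedBall, inter_comm]
        exact hm x (htK hx)
    _ = μ.restrict K (⋃ x ∈ t, closedBall x δ) :=
        (measure_biUnion_finset hdisj fun _ _ => measurableSet_closedBall).symm
    _ ≤ μ K := (measure_mono (subset_univ _)).trans_eq (Measure.restrict_apply_univ K)

theorem rpow_mul_hausdorffMeasure_le_inter_closedBall [MeasurableSpace X] [BorelSpace X] {k : ℕ}
    {f : Fin k → X → X} {c : Fin k → ℝ≥0} {a : ℝ≥0} (hc0 : ∀ i, 0 < c i) (hc1 : ∀ i, c i < 1)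
    (hac : ∀ i, a ≤ c i) (hf : ∀ i, IsSimilarity (f i) (c i)) (hK : K = ⋃ i, f i '' K)
    (hbdd : Bornology.IsBounded K) (hs : 0 ≤ s) {x : X} (hx : x ∈ K) {ε : ℝ≥0} (hε : 0 < ε)
    (hε1 : ε ≤ 1) :
    ((a * ε : ℝ≥0) : ℝ≥0∞) ^ s * μH[s] K ≤ μH[s] (K ∩ closedBall x (ε * Metric.diam K)) := by
  obtain ⟨n, ω, hxω, hlow, hup⟩ := exists_wordComp_ratio_mem_Icc hc0 hc1 hac hK.subset hx hε hε1
  have hsim := isSimilarity_wordComp hf ω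
  have hpos : 0 < ∏ j, c (ω j) := Finset.prod_pos fun _ _ => hc0 _
  have hsub : wordComp f ω '' K ⊆ K ∩ closedBall x (ε * Metric.diam K) := by
    refine subset_inter
      (wordComp_image_subset (fun i => (subset_iUnion _ i).trans hK.superset) ω) fun y hy => ?_
    calc dist y x ≤ Metric.diam (wordComp f ω '' K) :=
          dist_le_diam_of_mem (hsim.lipschitzWith.isBounded_image hbdd) hy hxω
      _ = (∏ j, c (ω j) : ℝ≥0) * Metric.diam K := hsim.diam_image hpos K
      _ ≤ ε * Metric.diam K := by gcongr
  calc ((a * ε : ℝ≥0) : ℝ≥0∞) ^ s * μH[s] K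
      ≤ ((∏ j, c (ω j) : ℝ≥0) : ℝ≥0∞) ^ s * μH[s] K := by gcongr
    _ = μH[s] (wordComp f ω '' K) := (hsim.hausdorffMeasure_image hpos hs K).symm
    _ ≤ μH[s] (K ∩ closedBall x (ε * Metric.diam K)) := measure_mono hsub

theorem toReal_ballContent_div_le_packingNum_mul_rpow (hK : TotallyBounded K) (hs : 0 ≤ s)
    (hδ : 0 < δ) : (ballContent s K).toReal / 3 ^ s ≤ packingNum K δ * δ ^ s := by
  have hne_top : (packingNum K δ : ℝ≥0∞) * ENNReal.ofReal (3 * δ) ^ s ≠ ⊤ :=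
    ENNReal.mul_ne_top (ENNReal.natCast_ne_top _)
      (ENNReal.rpow_ne_top_of_nonneg hs ENNReal.ofReal_ne_top)
  have hle := ENNReal.toReal_mono hne_top (ballContent_le_packingNum_mul hK hδ)
  rw [ENNReal.toReal_mul, ENNReal.toReal_natCast, ← ENNReal.toReal_rpow,
    ENNReal.toReal_ofReal (by positivity), Real.mul_rpow (by norm_num) hδ.le] at hle
  rw [div_le_iff₀ (by positivity)]
  linarith

theorem packingNum_mul_rpow_le [MeasurableSpace X] [BorelSpace X] {k : ℕ} {f : Fin k → X → X}
    {c : Fin k → ℝ≥0} {a : ℝ≥0} (ha : 0 < a) (hc1 : ∀ i, c i < 1) (hac : ∀ i, a ≤ c i)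
    (hf : ∀ i, IsSimilarity (f i) (c i)) (hK : K = ⋃ i, f i '' K) (htb : TotallyBounded K)
    (hs : 0 ≤ s) (hpos : μH[s] K ≠ 0) (hfin : μH[s] K ≠ ⊤) (hδ : 0 < δ)
    (hδK : δ ≤ Metric.diam K) : packingNum K δ * δ ^ s ≤ (Metric.diam K / a) ^ s := by
  have hdiam : 0 < Metric.diam K := hδ.trans_le hδK
  lift δ to ℝ≥0 using hδ.le
  obtain ⟨D, hD⟩ : ∃ D : ℝ≥0, (D : ℝ) = Metric.diam K := ⟨⟨_, diam_nonneg⟩, rfl⟩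
  rw [← hD] at hδK hdiam ⊢
  norm_cast at hδ hδK hdiam ⊢
  have hmeasure (x : X) (hx : x ∈ K) :
      ((a * (δ / D) : ℝ≥0) : ℝ≥0∞) ^ s * μH[s] K ≤ μH[s] (K ∩ closedBall x δ) := by
    have h := rpow_mul_hausdorffMeasure_le_inter_closedBall (fun i => ha.trans_le (hac i)) hc1 hac
      hf hK htb.isBounded hs hx (div_pos hδ hdiam) ((div_le_one hdiam).2 hδK)
    rwa [← hD, ← NNReal.coe_mul, div_mul_cancel₀ _ hdiam.ne'] at h
  have hle : (packingNum K δ : ℝ≥0∞) * ((a * (δ / D) : ℝ≥0) : ℝ≥0∞) ^ s ≤ 1 := by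
    have h := packingNum_mul_le_measure htb hδ hmeasure
    rwa [← mul_assoc, ← ENNReal.le_div_iff_mul_le (.inl hpos) (.inl hfin),
      ENNReal.div_self hpos hfin] at h
  rw [← ENNReal.coe_rpow_of_nonneg _ hs] at hle
  norm_cast at hle
  calc (packingNum K δ : ℝ≥0) * δ ^ s
      = packingNum K δ * (a * (δ / D)) ^ s * (D / a) ^ s := by
        rw [mul_assoc, ← NNReal.mul_rpow]
        congr 2
        field_simp
    _ ≤ (D / a) ^ s := mul_le_of_le_one_left' hle

theorem tendsto_log_div_neg_log {N : ℝ → ℝ} {A B : ℝ} (hA : 0 < A)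
    (hN : ∀ᶠ δ in 𝓝[>] (0 : ℝ), N δ * δ ^ s ∈ Icc A B) :
    Tendsto (fun δ => Real.log (N δ) / (-Real.log δ)) (𝓝[>] 0) (𝓝 s) := by
  have hlog : Tendsto (fun δ : ℝ => -Real.log δ) (𝓝[>] (0 : ℝ)) atTop :=
    tendsto_neg_atBot_atTop.comp Real.tendsto_log_nhdsGT_zero
  have hlim (C : ℝ) : Tendsto (fun δ : ℝ => C / (-Real.log δ) + s) (𝓝[>] (0 : ℝ)) (𝓝 s) := by
    simpa using (hlog.const_div_atTop C).add_const s
  have hsplit : ∀ᶠ δ in 𝓝[>] (0 : ℝ), 0 < -Real.log δ ∧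
      Real.log (N δ) / (-Real.log δ) = Real.log (N δ * δ ^ s) / (-Real.log δ) + s := by
    filter_upwards [hN, hlog.eventually_gt_atTop 0, self_mem_nhdsWithin] with δ hNδ hδ hδ0
    refine ⟨hδ, ?_⟩
    have hne : N δ * δ ^ s ≠ 0 := (hA.trans_le hNδ.1).ne'
    rw [Real.log_mul (left_ne_zero_of_mul hne) (right_ne_zero_of_mul hne), Real.log_rpow hδ0]
    have hlog_ne : Real.log δ ≠ 0 := (neg_pos.1 hδ).ne
    field_simp
    ring
  refine tendsto_of_tendsto_of_tendsto_of_le_of_le' (hlim (Real.log A)) (hlim (Real.log B)) ?_ ?_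
  · filter_upwards [hN, hsplit] with δ hNδ ⟨hδ, heq⟩
    rw [heq]
    gcongr
    exact hNδ.1
  · filter_upwards [hN, hsplit] with δ hNδ ⟨hδ, heq⟩
    rw [heq]
    gcongr
    exacts [hA.trans_le hNδ.1, hNδ.2]

theorem tendsto_log_packingNum_div_neg_log [MeasurableSpace X] [BorelSpace X] {k : ℕ}
    {f : Fin k → X → X} {c : Fin k → ℝ≥0} (hc0 : ∀ i, 0 < c i) (hc1 : ∀ i, c i < 1)
    (hf : ∀ i, IsSimilarity (f i) (c i)) (hK : K = ⋃ i, f i '' K) (htb : TotallyBounded K)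
    (hdiam : 0 < Metric.diam K) (hs : 0 ≤ s) (hcontent : 0 < ballContent s K)
    (hle : ballContent s K ≤ μH[s] K) (hfin : μH[s] K ≠ ⊤) :
    Tendsto (fun δ => Real.log (packingNum K δ) / (-Real.log δ)) (𝓝[>] 0) (𝓝 s) := by
  obtain ⟨a, _, ha, -, hcI⟩ := exists_ratio_bounds hc0 hc1
  have hA : 0 < (ballContent s K).toReal / 3 ^ s :=
    div_pos (ENNReal.toReal_pos hcontent.ne' (ne_top_of_le_ne_top hfin hle)) (by positivity)
  refine tendsto_log_div_neg_log hA (B := (Metric.diam K / a) ^ s) ?_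
  filter_upwards [Ioc_mem_nhdsGT hdiam] with δ ⟨hδ, hδK⟩
  exact ⟨toReal_ballContent_div_le_packingNum_mul_rpow htb hs hδ,
    packingNum_mul_rpow_le ha hc1 (fun i => (hcI i).1) hf hK htb hs (hcontent.trans_le hle).ne' hfin
      hδ hδK⟩

end BoxDimension

section CriticalExponent

variable {s : ℝ} {L H U : ℝ → ℝ≥0∞}

theorem sInf_zeros_eq (hs : 0 ≤ s) (hle : ∀ t ≤ s, H t ≠ 0) (hgt : ∀ t, s < t → H t = 0) :
    sInf {t : ℝ | 0 ≤ t ∧ H t = 0} = s := by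
  have hset : {t : ℝ | 0 ≤ t ∧ H t = 0} = Ioi s := by
    ext t
    exact ⟨fun ht => not_le.1 fun hts => hle t hts ht.2, fun ht => ⟨hs.trans ht.le, hgt t ht⟩⟩
  rw [hset, csInf_Ioi]

theorem sInf_zeros_eq_and_pos_and_lt_top_of_le (hs : 0 ≤ s) (hL : ∀ t ≤ s, 0 < L t)
    (hU : ∀ t, s < t → U t = 0) (hUs : U s < ⊤) (hLH : L ≤ H) (hHU : H ≤ U) :
    sInf {t : ℝ | 0 ≤ t ∧ H t = 0} = s ∧ 0 < H s ∧ H s < ⊤ :=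
  ⟨sInf_zeros_eq hs (fun t ht => ((hL t ht).trans_le (hLH t)).ne')
    fun t ht => nonpos_iff_eq_zero.1 ((hHU t).trans_eq (hU t ht)),
    (hL s le_rfl).trans_le (hLH s), (hHU s).trans_lt hUs⟩

theorem sInf_zeros_eq_and_pos_and_lt_top_of_le_H3 {X : Type*} [MetricSpace X]
    [MeasurableSpace X] [BorelSpace X] {k : ℕ} {f : Fin k → X → X} {c : Fin k → ℝ≥0} {K : Set X}
    (hc0 : ∀ i, 0 < c i) (hc1 : ∀ i, c i < 1) (hf : ∀ i, IsSimilarity (f i) (c i)) (hs : 0 ≤ s)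
    (hsum : ∑ i, c i ^ s = 1) (hpos : 0 < μH[s] K) (hH : (fun t => μH[t] K) ≤ H)
    (hH3 : H ≤ H3 f K) :
    sInf {t : ℝ | 0 ≤ t ∧ H t = 0} = s ∧ 0 < H s ∧ H s < ⊤ := by
  refine sInf_zeros_eq_and_pos_and_lt_top_of_le hs
    (fun t ht => hpos.trans_le (Measure.hausdorffMeasure_mono ht K))
    (fun t ht => H3_eq_zero hc0 hf (hs.trans ht.le) (sum_rpow_lt_one hc0 hc1 hsum ht)) ?_ hH hH3
  rw [H3_eq_diam_rpow hc0 hf hsum]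
  exact ENNReal.rpow_lt_top_of_nonneg hs ENNReal.ofReal_ne_top

end CriticalExponent

section FiniteDimensional

variable {E : Type*} [NormedAddCommGroup E] [NormedSpace ℝ E] [FiniteDimensional ℝ E]
  [MeasurableSpace E] [BorelSpace E]

theorem isUpperAhlforsRegular_of_isAddHaarMeasure (μ : Measure E) [μ.IsAddHaarMeasure] :
    IsUpperAhlforsRegular μ (Module.finrank ℝ E) :=
  ⟨(μ (closedBall 0 1)).toNNReal, fun x r => by
    rw [Measure.addHaar_closedBall' μ x r.coe_nonneg,
      ENNReal.coe_toNNReal measure_closedBall_lt_top.ne, mul_comm,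
      ENNReal.ofReal_pow r.coe_nonneg, ENNReal.ofReal_coe_nnreal, ENNReal.rpow_natCast]⟩

end FiniteDimensional

theorem all_dims_eq_general {X : Type*} [MetricSpace X] [CompleteSpace X] [MeasurableSpace X]
    [BorelSpace X] {k : ℕ} {f : Fin k → X → X} {c : Fin k → ℝ}
    (hc : ∀ i, c i ∈ Set.Ioo (0 : ℝ) 1) (hf : ∀ i, IsSimilarity (f i) (c i)) {V : Set X}
    (hV : IsFeasibleSet f V) {Q : ℝ} (hQ : 0 ≤ Q)
    (hreg : IsUpperAhlforsRegular (μH[Q] : Measure X) Q) (hVpos : μH[Q] V ≠ 0) {K : Set X}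
    (hcpt : IsCompact K) (hK : K = ⋃ i, f i '' K) (hdiam : 0 < Metric.diam K) {s : ℝ}
    (hsum : ∑ i, c i ^ s = 1) :
    Filter.Tendsto (fun δ : ℝ => Real.log (packingNum K δ) / (-Real.log δ))
        (𝓝[>] (0 : ℝ)) (𝓝 s) ∧
      sInf {t : ℝ | 0 ≤ t ∧ H3 f K t = 0} = s ∧
      sInf {t : ℝ | 0 ≤ t ∧ H4 f K t = 0} = s ∧
      sInf {t : ℝ | 0 ≤ t ∧ H5 f K t = 0} = s ∧
      sInf {t : ℝ | 0 ≤ t ∧ H6 f K t = 0} = s ∧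
      dimH K = ENNReal.ofReal s ∧
      (0 < μH[s] K ∧ μH[s] K < ⊤) ∧
      (0 < H3 f K s ∧ H3 f K s < ⊤) ∧
      (0 < H4 f K s ∧ H4 f K s < ⊤) ∧
      (0 < H5 f K s ∧ H5 f K s < ⊤) ∧
      (0 < H6 f K s ∧ H6 f K s < ⊤) := by
  lift c to Fin k → ℝ≥0 using fun i => (hc i).1.le
  have hc0 (i : Fin k) : 0 < c i := NNReal.coe_pos.1 (hc i).1
  have hc1 (i : Fin k) : c i < 1 := NNReal.coe_lt_one.1 (hc i).2
  replace hsum : ∑ i, c i ^ s = 1 := NNReal.eq (by simpa using hsum)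
  have hne : K.Nonempty := nonempty_iff_ne_empty.2 fun h => by simp [h] at hdiam
  have hs : 0 < s :=
    exponent_pos (by simpa using one_lt_of_eq_iUnion_image hc0 hc1 hf hK hdiam) hc0 hc1 hsum
  have hcontent : 0 < ballContent s K := hV.ballContent_pos hc0 hc1 hf
    (fun i => (subset_iUnion _ i).trans hK.superset) hne hcpt.isBounded hs.le hsum hQ hreg hVpos
  have hle : ballContent s K ≤ μH[s] K := ballContent_le_hausdorffMeasure hcpt hs
  have h6 : (fun t => μH[t] K) ≤ H6 f K := hausdorffMeasure_le_H6 hf hcpt.isBounded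
  have h65 : H6 f K ≤ H5 f K := H6_le_H5 hc0 hc1 hf
  have h54 : H5 f K ≤ H4 f K := H5_le_H4
  have h43 : H4 f K ≤ H3 f K := H4_le_H3 hK.subset
  have hcritical {H : ℝ → ℝ≥0∞} := sInf_zeros_eq_and_pos_and_lt_top_of_le_H3 (H := H) hc0 hc1 hf
    hs.le hsum (hcontent.trans_le hle)
  obtain ⟨-, hμpos, hμfin⟩ := hcritical le_rfl (h6.trans (h65.trans (h54.trans h43)))
  obtain ⟨hdim3, hmeas3⟩ := hcritical (h6.trans (h65.trans (h54.trans h43))) le_rfl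
  obtain ⟨hdim4, hmeas4⟩ := hcritical (h6.trans (h65.trans h54)) h43
  obtain ⟨hdim5, hmeas5⟩ := hcritical (h6.trans h65) (h54.trans h43)
  obtain ⟨hdim6, hmeas6⟩ := hcritical h6 (h65.trans (h54.trans h43))
  refine ⟨tendsto_log_packingNum_div_neg_log hc0 hc1 hf hK hcpt.totallyBounded hdiam hs.le hcontent
    hle hμfin.ne, hdim3, hdim4, hdim5, hdim6, ?_, ⟨hμpos, hμfin⟩, hmeas3, hmeas4, hmeas5, hmeas6⟩
  lift s to ℝ≥0 using hs.le
  simpa using dimH_of_hausdorffMeasure_ne_zero_ne_top hμpos.ne' hμfin.ne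

/-- under the OSC, the box dimension, the fractal dimensions III–VI and the
Hausdorff dimension of the attractor all equal the Moran root `s`, and all the associated
measures of `K` are positive and finite. -/
theorem all_dims_eq {d k : ℕ}
    (f : Fin k → EuclideanSpace ℝ (Fin d) → EuclideanSpace ℝ (Fin d))
    (c : Fin k → ℝ) (hc : ∀ i, c i ∈ Set.Ioo (0 : ℝ) 1)
    (hf : ∀ i, IsSimilarity (f i) (c i)) (hosc : OSC f)
    (K : Set (EuclideanSpace ℝ (Fin d))) (hne : K.Nonempty) (hcpt : IsCompact K)
    (hK : K = ⋃ i, f i '' K) (hdiam : 0 < Metric.diam K)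
    (s : ℝ) (hs : 0 ≤ s) (hsum : ∑ i, c i ^ s = 1) :
    Filter.Tendsto (fun δ : ℝ => Real.log (packingNum K δ) / (-Real.log δ))
        (𝓝[>] (0 : ℝ)) (𝓝 s) ∧
      sInf {t : ℝ | 0 ≤ t ∧ H3 f K t = 0} = s ∧
      sInf {t : ℝ | 0 ≤ t ∧ H4 f K t = 0} = s ∧
      sInf {t : ℝ | 0 ≤ t ∧ H5 f K t = 0} = s ∧
      sInf {t : ℝ | 0 ≤ t ∧ H6 f K t = 0} = s ∧
      dimH K = ENNReal.ofReal s ∧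
      (0 < μH[s] K ∧ μH[s] K < ⊤) ∧
      (0 < H3 f K s ∧ H3 f K s < ⊤) ∧
      (0 < H4 f K s ∧ H4 f K s < ⊤) ∧
      (0 < H5 f K s ∧ H5 f K s < ⊤) ∧
      (0 < H6 f K s ∧ H6 f K s < ⊤) := by
  obtain ⟨V, hVne, hVo, hVbdd, hVf, hVdisj⟩ := hosc
  exact all_dims_eq_general hc hf ⟨hVo.measurableSet, hVbdd, hVf, hVdisj⟩ (Nat.cast_nonneg _)
    (isUpperAhlforsRegular_of_isAddHaarMeasure _) (hVo.measure_pos _ hVne).ne' hcpt hK hdiam hsum
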